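/- arXiv:2103.15426 — 5 statements merged into one kernel-verified Lean document; each statement's English description precedes it below -/
import Mathlib

section
/- Let μ and ν be Borel probability measures on [0,1) (parametrizing the circle S¹) with cumulative distribution functions F_μ, F_ν. Then the circular optimal transport distance satisfies COT(μ,ν) = inf_{α ∈ ℝ} ∫₀¹ |F_μ(t) − F_ν(t) − α| dt. -/
/-!
Cut the circle at the base point `0`. A unit mass moved from `x` to `y` along a path crossing the
base point `c` times (signed) has net flow `1_{x ≤ t} - 1_{y ≤ t} - c` through each `t`, and the
`L¹` norm of this flow is at least `circDist x y` for every integer `c` (`circDist_le`), with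
equality for the crossing number of a geodesic (`circDist_eq`).

Lower bound (`exists_levCost_le`): for a coupling `π`, let `α` be the mean crossing number. The mean
flow through `t` is `F_μ(t) - F_ν(t) - α`, so the triangle inequality and Fubini bound the cost of
`π` from below by `∫ |F_μ - F_ν - α|`.

Upper bound (`exists_coupling_le`): for a level `α` and `u` uniform on `(0,1)`, couple the quantile
of `μ` at `u` with the quantile of `ν` at the fractional part of `u - α`, which is again uniform
(`map_fract_unif`), with crossing number `-⌊u - α⌋`. By the Galois property of quantiles
(`exists_quantile`), the flow through `t` is almost surely
`⌊F_μ(t) - u⌋ - ⌊F_ν(t) + α - u⌋`, which has the same sign for all `u` (`floor_sign`). The triangle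
inequality is therefore an equality and the cost is at most `∫ |F_μ - F_ν - α|`.
-/

open MeasureTheory Filter
open scoped ENNReal NNReal

noncomputable section

/-- Intrinsic (geodesic) distance on the circle parametrized by `[0,1)`. -/
def circDist (x y : ℝ) : ℝ := min |x - y| (1 - |x - y|)

/-- `π` is a coupling of `μ` and `ν`. -/
def IsCoupling (π : Measure (ℝ × ℝ)) (μ ν : Measure ℝ) : Prop :=
  π.map Prod.fst = μ ∧ π.map Prod.snd = ν

/-- Circular optimal transport distance between Borel probability measures on `[0,1)`. -/
def COT (μ ν : Measure ℝ) : ℝ :=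
  sInf { r : ℝ | ∃ π : Measure (ℝ × ℝ), IsProbabilityMeasure π ∧ IsCoupling π μ ν ∧
    r = ∫ p, circDist p.1 p.2 ∂π }

/-- Cumulative distribution function `F_μ(t) = μ([0,t])`. -/
def cdf (μ : Measure ℝ) (t : ℝ) : ℝ := (μ (Set.Icc 0 t)).toReal

/-! ### Flow of a single path -/

/-- The uniform probability measure on the unit interval. The open interval is used so that
quantiles are finite at every point of the support. -/
def unif : Measure ℝ := volume.restrict (Set.Ioo 0 1)

instance : IsProbabilityMeasure unif := ⟨by simp [unif]⟩

lemma unif_eq_Ico : volume.restrict (Set.Ico (0:ℝ) 1) = unif :=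
  (Measure.restrict_congr_set Ioo_ae_eq_Ico).symm

/-- The distribution function `t ↦ 1_{x ≤ t}` of the Dirac mass at `x`. -/
def step (x t : ℝ) : ℝ := if x ≤ t then 1 else 0

lemma measurable_step {β : Type*} [MeasurableSpace β] {f g : β → ℝ} (hf : Measurable f)
    (hg : Measurable g) : Measurable fun b => step (f b) (g b) :=
  Measurable.ite (measurableSet_le hf hg) measurable_const measurable_const

lemma abs_step_le (x t : ℝ) : |step x t| ≤ 1 := by
  unfold step; split_ifs <;> simp

/-- The `L¹` norm of the flow of a unit mass moved from `x` to `y` along a path that crosses the base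
point `c` times (signed): a flow of `1 - c` on the arc `[x, y)` and `-c` on the rest. -/
lemma integral_step_of_le {x y : ℝ} (c : ℝ) (hx : 0 ≤ x) (hxy : x ≤ y) (hy : y ≤ 1) :
    ∫ t, |step x t - step y t - c| ∂unif = (y - x) * |1 - c| + (1 - (y - x)) * |c| := by
  have h : ∀ t, |step x t - step y t - c|
      = |c| + (Set.Ico x y).indicator (fun _ => |1 - c| - |c|) t := by
    intro t
    by_cases ht : t ∈ Set.Ico x y
    · rw [Set.indicator_of_mem ht]
      simp [step, ht.1, not_le.2 ht.2]
    · rw [Set.indicator_of_notMem ht]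
      have : step x t = step y t := by
        unfold step
        by_cases h1 : x ≤ t
        · have : y ≤ t := by by_contra h2; exact ht ⟨h1, not_le.1 h2⟩
          simp [h1, this]
        · have : ¬ y ≤ t := fun h2 => h1 (hxy.trans h2)
          simp [h1, this]
      simp [this]
  simp_rw [h]
  rw [integral_add (integrable_const _)
    ((integrable_const _).indicator measurableSet_Ico), integral_indicator_const _ measurableSet_Ico]
  have hm : unif.real (Set.Ico x y) = y - x := by
    rw [← unif_eq_Ico, measureReal_restrict_apply measurableSet_Ico,
      Set.inter_eq_left.2 (Set.Ico_subset_Ico hx hy)]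
    simp [hxy]
  rw [hm]
  simp
  ring

lemma integral_step_of_ge {x y : ℝ} (c : ℝ) (hy : 0 ≤ y) (hyx : y ≤ x) (hx : x ≤ 1) :
    ∫ t, |step x t - step y t - c| ∂unif = (x - y) * |1 + c| + (1 - (x - y)) * |c| := by
  have := integral_step_of_le (-c) hy hyx hx
  rw [sub_neg_eq_add, abs_neg] at this
  rw [← this]
  congr 1; ext t
  rw [← abs_neg]; congr 1; ring

lemma mul_one_le_abs {n : ℤ} (h : n ≠ 0) : (1:ℝ) ≤ |(n:ℝ)| := by
  exact_mod_cast Int.one_le_abs h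

/-- A path from `x` to `y` crossing the base point any integer number of times is at least as long as
the geodesic. -/
lemma circDist_le {x y : ℝ} (n : ℤ) (hx : x ∈ Set.Icc (0:ℝ) 1) (hy : y ∈ Set.Icc (0:ℝ) 1) :
    circDist x y ≤ ∫ t, |step x t - step y t - n| ∂unif := by
  obtain ⟨hx0, hx1⟩ := hx
  obtain ⟨hy0, hy1⟩ := hy
  unfold circDist
  rcases le_total x y with h | h
  · rw [integral_step_of_le _ hx0 h hy1, abs_sub_comm, abs_of_nonneg (sub_nonneg.2 h)]
    rcases eq_or_ne n 0 with rfl | hn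
    · simp
    · refine (min_le_right _ _).trans ?_
      have := mul_one_le_abs hn
      nlinarith [abs_nonneg (1 - (n:ℝ))]
  · rw [integral_step_of_ge _ hy0 h hx1, abs_of_nonneg (sub_nonneg.2 h)]
    rcases eq_or_ne n 0 with rfl | hn
    · simp
    · refine (min_le_right _ _).trans ?_
      have := mul_one_le_abs hn
      nlinarith [abs_nonneg (1 + (n:ℝ))]

/-- The signed number of times the geodesic from `x` to `y` crosses the base point. -/
def crossing (x y : ℝ) : ℝ := if |x - y| ≤ 1 / 2 then 0 else if x ≤ y then 1 else -1

lemma circDist_eq {x y : ℝ} (hx : x ∈ Set.Icc (0:ℝ) 1) (hy : y ∈ Set.Icc (0:ℝ) 1) :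
    circDist x y = ∫ t, |step x t - step y t - crossing x y| ∂unif := by
  obtain ⟨hx0, hx1⟩ := hx
  obtain ⟨hy0, hy1⟩ := hy
  unfold circDist
  rcases le_total x y with h | h
  · rw [integral_step_of_le _ hx0 h hy1]
    unfold crossing
    rw [abs_sub_comm, abs_of_nonneg (sub_nonneg.2 h)]
    split_ifs with h1
    · rw [min_eq_left (by linarith)]; simp
    · rw [min_eq_right (by linarith)]; simp
  · rw [integral_step_of_ge _ hy0 h hx1]
    unfold crossing
    rw [abs_of_nonneg (sub_nonneg.2 h)]
    split_ifs with h1 h2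
    · rw [min_eq_left (by linarith)]; simp
    · linarith
    · rw [min_eq_right (by linarith)]; simp

lemma measurable_crossing : Measurable fun p : ℝ × ℝ => crossing p.1 p.2 := by
  unfold crossing
  refine Measurable.ite (measurableSet_le (by fun_prop) (by fun_prop)) measurable_const ?_
  exact Measurable.ite (measurableSet_le measurable_fst measurable_snd)
    measurable_const measurable_const

lemma abs_crossing_le (x y : ℝ) : |crossing x y| ≤ 1 := by
  unfold crossing; split_ifs <;> simp

lemma integrable_of_abs_le {β : Type*} [MeasurableSpace β] {ρ : Measure β} [IsFiniteMeasure ρ]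
    {f : β → ℝ} (C : ℝ) (hf : Measurable f) (h : ∀ᵐ b ∂ρ, |f b| ≤ C) : Integrable f ρ :=
  Integrable.of_bound hf.aestronglyMeasurable C h

/-! ### Distribution functions and quantiles -/

section CDF

variable {μ : Measure ℝ} [IsProbabilityMeasure μ]

lemma ae_mem_Ico (hμ : μ (Set.Ico 0 1) = 1) : ∀ᵐ x ∂μ, x ∈ Set.Ico (0:ℝ) 1 :=
  (prob_compl_eq_zero_iff measurableSet_Ico).2 hμ

lemma cdf_eq_real_Iic (hμ : μ (Set.Ico 0 1) = 1) (t : ℝ) : cdf μ t = μ.real (Set.Iic t) := by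
  unfold cdf
  rw [Measure.real]
  congr 1
  refine measure_congr ?_
  filter_upwards [ae_mem_Ico hμ] with x hx
  refine propext ⟨fun h => h.2, fun h => ⟨hx.1, h⟩⟩

lemma cdf_eq_integral_step (hμ : μ (Set.Ico 0 1) = 1) (t : ℝ) :
    cdf μ t = ∫ x, step x t ∂μ := by
  have : (fun x => step x t) = (Set.Iic t).indicator 1 := by
    ext x
    simp [step, Set.indicator_apply]
  rw [this, integral_indicator_one measurableSet_Iic, cdf_eq_real_Iic hμ]

/-- Quantile transform: a random variable `X` on `(0,1)` with law `μ`, related to the distribution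
function of `μ` by a Galois connection. -/
lemma exists_quantile (μ : Measure ℝ) [IsProbabilityMeasure μ] :
    ∃ X : ℝ → ℝ, Measurable X ∧ unif.map X = μ ∧
      ∀ᵐ u ∂unif, ∀ t, X u ≤ t ↔ u ≤ μ.real (Set.Iic t) := by
  set F := ProbabilityTheory.cdf μ with hF
  let Q : ℝ → ℝ := fun u => sInf {t | u ≤ F t}
  have hne : ∀ u ∈ Set.Ioo (0:ℝ) 1, {t | u ≤ F t}.Nonempty := fun u hu =>
    ((ProbabilityTheory.tendsto_cdf_atTop μ).eventually_const_le hu.2).exists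
  have hbd : ∀ u ∈ Set.Ioo (0:ℝ) 1, BddBelow {t | u ≤ F t} := by
    intro u hu
    obtain ⟨a, ha⟩ := ((ProbabilityTheory.tendsto_cdf_atBot μ).eventually_lt_const hu.1).exists
    refine ⟨a, fun t ht => ?_⟩
    by_contra hlt
    exact absurd (ht.trans (F.mono (not_le.1 hlt).le)) (not_le.2 ha)
  have hQ : ∀ u ∈ Set.Ioo (0:ℝ) 1, ∀ t, Q u ≤ t ↔ u ≤ F t := by
    intro u hu t
    refine ⟨fun h => ?_, fun h => csInf_le (hbd u hu) h⟩
    -- right continuity of the distribution function makes the infimum attained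
    refine ge_of_tendsto ((F.right_continuous t).mono_left
      (nhdsWithin_mono t Set.Ioi_subset_Ici_self)) ?_
    filter_upwards [self_mem_nhdsWithin] with s hs
    obtain ⟨r, hr, hrs⟩ := exists_lt_of_csInf_lt (hne u hu) (lt_of_le_of_lt h hs)
    exact le_trans hr (F.mono hrs.le)
  have hmono : MonotoneOn Q (Set.Ioo 0 1) := fun u hu v hv huv =>
    (hQ u hu _).2 (huv.trans ((hQ v hv _).1 le_rfl))
  have hae : AEMeasurable Q unif := aemeasurable_restrict_of_monotoneOn measurableSet_Ioo hmono
  have hX : ∀ᵐ u ∂unif, u ∈ Set.Ioo (0:ℝ) 1 ∧ ∀ t, hae.mk Q u ≤ t ↔ u ≤ μ.real (Set.Iic t) := by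
    filter_upwards [hae.ae_eq_mk, ae_restrict_mem measurableSet_Ioo] with u hu hmem
    refine ⟨hmem, fun t => ?_⟩
    rw [← hu, hQ u hmem, hF, ProbabilityTheory.cdf_eq_real]
  refine ⟨hae.mk Q, hae.measurable_mk, ?_, hX.mono fun u h => h.2⟩
  have : IsProbabilityMeasure (unif.map (hae.mk Q)) :=
    Measure.isProbabilityMeasure_map hae.measurable_mk.aemeasurable
  refine Measure.ext_of_Iic _ _ fun t => ?_
  rw [Measure.map_apply hae.measurable_mk measurableSet_Iic]
  have h1 : unif (hae.mk Q ⁻¹' Set.Iic t) = unif (Set.Ioc 0 (μ.real (Set.Iic t))) := by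
    refine measure_congr ?_
    filter_upwards [hX] with u hu
    exact propext ⟨fun h => ⟨hu.1.1, (hu.2 t).1 h⟩, fun h => (hu.2 t).2 h.2⟩
  have h2 : unif = volume.restrict (Set.Ioc (0:ℝ) 1) :=
    Measure.restrict_congr_set Ioo_ae_eq_Ioc
  rw [h1, h2, Measure.restrict_apply measurableSet_Ioc,
    Set.inter_eq_left.2 (Set.Ioc_subset_Ioc_right measureReal_le_one), Real.volume_Ioc, sub_zero,
    ofReal_measureReal]

end CDF

/-! ### Rotations of the uniform measure -/

/-- Rotations of the circle preserve the uniform measure. -/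
lemma map_fract_unif (α : ℝ) : unif.map (fun u => Int.fract (u - α)) = unif := by
  have hIoc : unif = volume.restrict (Set.Ioc (0:ℝ) 1) :=
    Measure.restrict_congr_set Ioo_ae_eq_Ioc
  have hm : Measurable fun u : ℝ => Int.fract (u - α) :=
    measurable_fract.comp (measurable_id.sub_const α)
  ext s hs
  rw [Measure.map_apply hm hs]
  set A : Set ℝ := Int.fract ⁻¹' s with hA
  have hAm : MeasurableSet A := measurable_fract hs
  have key := (isAddFundamentalDomain_Ioc one_pos (-α)).measure_set_eq
    (isAddFundamentalDomain_Ioc one_pos (0:ℝ)) hAm (by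
      rintro ⟨_, n, rfl⟩
      ext x
      simp [hA, AddSubgroup.vadd_def])
  have h1 : unif ((fun u => Int.fract (u - α)) ⁻¹' s) = volume (A ∩ Set.Ioc (-α) (-α + 1)) := by
    rw [hIoc, Measure.restrict_apply (hm hs), 
      ← (measurePreserving_sub_right volume α).measure_preimage
        (hAm.inter measurableSet_Ioc).nullMeasurableSet]
    congr 1
    ext u
    simp only [hA, Set.mem_inter_iff, Set.mem_preimage, Set.mem_Ioc]
    refine and_congr_right fun _ => ⟨fun h => ⟨?_, ?_⟩, fun h => ⟨?_, ?_⟩⟩ <;> linarith [h.1, h.2]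
  have h2 : unif s = unif A := by
    refine measure_congr ?_
    filter_upwards [ae_restrict_mem measurableSet_Ioo] with u hu
    have : Int.fract u = u := Int.fract_eq_self.2 ⟨hu.1.le, hu.2⟩
    refine propext ?_
    change u ∈ s ↔ Int.fract u ∈ s
    rw [this]
  rw [h1, h2, key, hIoc, Measure.restrict_apply hAm, zero_add]

lemma integral_id_unif : ∫ u, u ∂unif = 1 / 2 := by
  have : unif = volume.restrict (Set.Ioc (0:ℝ) 1) :=
    Measure.restrict_congr_set Ioo_ae_eq_Ioc
  rw [this, ← intervalIntegral.integral_of_le zero_le_one, integral_id]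
  norm_num

lemma integrable_id_unif : Integrable (fun u : ℝ => u) unif := by
  refine integrable_of_abs_le 1 measurable_id ?_
  filter_upwards [ae_restrict_mem measurableSet_Ioo] with u hu
  exact abs_le.2 ⟨by linarith [hu.1], hu.2.le⟩

lemma integrable_fract_unif (α : ℝ) : Integrable (fun u : ℝ => Int.fract (u - α)) unif := by
  refine integrable_of_abs_le 1 (measurable_fract.comp (measurable_id.sub_const α)) ?_
  exact ae_of_all _ fun u => by
    rw [abs_of_nonneg (Int.fract_nonneg _)]; exact (Int.fract_lt_one _).le

lemma floor_eq_sub (α u : ℝ) : (⌊u - α⌋ : ℝ) = u - α - Int.fract (u - α) := by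
  rw [Int.fract]; ring

lemma integrable_floor_unif (α : ℝ) : Integrable (fun u : ℝ => (⌊u - α⌋ : ℝ)) unif := by
  simp_rw [floor_eq_sub]
  exact (integrable_id_unif.sub (integrable_const α)).sub (integrable_fract_unif α)

lemma integral_floor_unif (α : ℝ) : ∫ u, (⌊u - α⌋ : ℝ) ∂unif = -α := by
  simp_rw [floor_eq_sub]
  have h : ∫ u, Int.fract (u - α) ∂unif = 1 / 2 := by
    have := integral_map (μ := unif) (φ := fun u => Int.fract (u - α)) (f := fun x : ℝ => x)
      (measurable_fract.comp (measurable_id.sub_const α)).aemeasurable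
      measurable_id.aestronglyMeasurable
    rw [← this, map_fract_unif, integral_id_unif]
  have h' : Integrable (fun u : ℝ => u - α) unif := integrable_id_unif.sub (integrable_const α)
  rw [integral_sub h' (integrable_fract_unif α),
    integral_sub integrable_id_unif (integrable_const α), h, integral_id_unif]
  simp

/-! ### The two inequalities -/

/-- Away from a null set of `u`, the expression below equals `⌊f - u⌋ - ⌊g + α - u⌋`, so its sign is
that of `f - g - α`. -/
lemma floor_sign {f g α u : ℝ} (hf0 : 0 ≤ f) (hf1 : f ≤ 1) (hg0 : 0 ≤ g) (hg1 : g ≤ 1)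
    (hu : u ∈ Set.Ioo (0:ℝ) 1) (hw : 0 < Int.fract (u - α)) :
    (0 ≤ f - g - α → 0 ≤ step u f - step (Int.fract (u - α)) g + ⌊u - α⌋) ∧
    (f - g - α ≤ 0 → step u f - step (Int.fract (u - α)) g + ⌊u - α⌋ ≤ 0) := by
  have hw1 := Int.fract_lt_one (u - α)
  have hn := floor_eq_sub α u
  set w := Int.fract (u - α)
  set n := ⌊u - α⌋
  obtain ⟨hu0, hu1⟩ := hu
  unfold step
  constructor
  · intro h
    split_ifs with h1 h2 h2
    · have : (-1:ℤ) < n := by exact_mod_cast (by push_cast; linarith : ((-1:ℤ):ℝ) < n)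
      have : ((0:ℤ):ℝ) ≤ n := by exact_mod_cast (by omega : (0:ℤ) ≤ n)
      push_cast at this; linarith
    · have : (-2:ℤ) < n := by exact_mod_cast (by push_cast; linarith : ((-2:ℤ):ℝ) < n)
      have : ((-1:ℤ):ℝ) ≤ n := by exact_mod_cast (by omega : (-1:ℤ) ≤ n)
      push_cast at this; linarith
    · have : (0:ℤ) < n := by exact_mod_cast (by push_cast; linarith : ((0:ℤ):ℝ) < n)
      have : ((1:ℤ):ℝ) ≤ n := by exact_mod_cast (by omega : (1:ℤ) ≤ n)
      push_cast at this; linarith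
    · have : (-1:ℤ) < n := by exact_mod_cast (by push_cast; linarith : ((-1:ℤ):ℝ) < n)
      have : ((0:ℤ):ℝ) ≤ n := by exact_mod_cast (by omega : (0:ℤ) ≤ n)
      push_cast at this; linarith
  · intro h
    split_ifs with h1 h2 h2
    · have : n < (1:ℤ) := by exact_mod_cast (by push_cast; linarith : (n:ℝ) < ((1:ℤ):ℝ))
      have : (n:ℝ) ≤ ((0:ℤ):ℝ) := by exact_mod_cast (by omega : n ≤ (0:ℤ))
      push_cast at this; linarith
    · have : n < (0:ℤ) := by exact_mod_cast (by push_cast; linarith : (n:ℝ) < ((0:ℤ):ℝ))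
      have : (n:ℝ) ≤ ((-1:ℤ):ℝ) := by exact_mod_cast (by omega : n ≤ (-1:ℤ))
      push_cast at this; linarith
    · have : n < (2:ℤ) := by exact_mod_cast (by push_cast; linarith : (n:ℝ) < ((2:ℤ):ℝ))
      have : (n:ℝ) ≤ ((1:ℤ):ℝ) := by exact_mod_cast (by omega : n ≤ (1:ℤ))
      push_cast at this; linarith
    · have : n < (1:ℤ) := by exact_mod_cast (by push_cast; linarith : (n:ℝ) < ((1:ℤ):ℝ))
      have : (n:ℝ) ≤ ((0:ℤ):ℝ) := by exact_mod_cast (by omega : n ≤ (0:ℤ))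
      push_cast at this; linarith

/-- A function of constant sign satisfies the triangle inequality for integrals with equality. -/
lemma integral_abs_of_sign {β : Type*} [MeasurableSpace β] {ρ : Measure β} {h : β → ℝ} {a : ℝ}
    (hint : ∫ b, h b ∂ρ = a) (hs : ∀ᵐ b ∂ρ, (0 ≤ a → 0 ≤ h b) ∧ (a ≤ 0 → h b ≤ 0)) :
    ∫ b, |h b| ∂ρ = |a| := by
  rcases le_total 0 a with ha | ha
  · rw [abs_of_nonneg ha, ← hint]
    exact integral_congr_ae (hs.mono fun b hb => abs_of_nonneg (hb.1 ha))
  · rw [abs_of_nonpos ha, ← hint, ← integral_neg]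
    exact integral_congr_ae (hs.mono fun b hb => abs_of_nonpos (hb.2 ha))

/-- The level `α` is the mean crossing number of the coupling. -/
lemma exists_levCost_le {μ ν : Measure ℝ} [IsProbabilityMeasure μ] [IsProbabilityMeasure ν]
    (hμ : μ (Set.Ico 0 1) = 1) (hν : ν (Set.Ico 0 1) = 1) {π : Measure (ℝ × ℝ)}
    [IsProbabilityMeasure π] (hπ : IsCoupling π μ ν) :
    ∃ α : ℝ, ∫ t, |cdf μ t - cdf ν t - α| ∂unif ≤ ∫ p, circDist p.1 p.2 ∂π := by
  refine ⟨∫ p, crossing p.1 p.2 ∂π, ?_⟩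
  let H : (ℝ × ℝ) → ℝ → ℝ := fun p t => step p.1 t - step p.2 t - crossing p.1 p.2
  have hHm : Measurable (Function.uncurry H) := by
    refine ((measurable_step (by fun_prop) (by fun_prop)).sub
      (measurable_step (by fun_prop) (by fun_prop))).sub (measurable_crossing.comp measurable_fst)
  have hHb : ∀ p t, |H p t| ≤ 3 := by
    intro p t
    have h1 := abs_le.1 (abs_step_le p.1 t)
    have h2 := abs_le.1 (abs_step_le p.2 t)
    have h3 := abs_le.1 (abs_crossing_le p.1 p.2)
    exact abs_le.2 ⟨by simp only [H]; linarith, by simp only [H]; linarith⟩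
  have hint : Integrable (fun q : (ℝ × ℝ) × ℝ => |H q.1 q.2|) (π.prod unif) :=
    integrable_of_abs_le 3 (continuous_abs.measurable.comp hHm)
      (ae_of_all _ fun q => by rw [abs_abs]; exact hHb _ _)
  have hx : ∀ᵐ p ∂π, p.1 ∈ Set.Ico (0:ℝ) 1 :=
    ae_of_ae_map measurable_fst.aemeasurable (hπ.1.symm ▸ ae_mem_Ico hμ)
  have hy : ∀ᵐ p ∂π, p.2 ∈ Set.Ico (0:ℝ) 1 :=
    ae_of_ae_map measurable_snd.aemeasurable (hπ.2.symm ▸ ae_mem_Ico hν)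
  have hcost : ∫ p, circDist p.1 p.2 ∂π = ∫ t, ∫ p, |H p t| ∂π ∂unif := by
    rw [← integral_integral_swap hint]
    refine integral_congr_ae ?_
    filter_upwards [hx, hy] with p h1 h2
    exact circDist_eq (Set.Ico_subset_Icc_self h1) (Set.Ico_subset_Icc_self h2)
  rw [hcost]
  have hlev : ∀ t, cdf μ t - cdf ν t - ∫ p, crossing p.1 p.2 ∂π = ∫ p, H p t ∂π := by
    intro t
    have i1 : Integrable (fun p : ℝ × ℝ => step p.1 t) π :=
      integrable_of_abs_le 1 (measurable_step (by fun_prop) (by fun_prop))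
        (ae_of_all _ fun p => abs_step_le _ _)
    have i2 : Integrable (fun p : ℝ × ℝ => step p.2 t) π :=
      integrable_of_abs_le 1 (measurable_step (by fun_prop) (by fun_prop))
        (ae_of_all _ fun p => abs_step_le _ _)
    have i3 : Integrable (fun p : ℝ × ℝ => crossing p.1 p.2) π :=
      integrable_of_abs_le 1 measurable_crossing (ae_of_all _ fun p => abs_crossing_le _ _)
    have e1 : cdf μ t = ∫ p, step p.1 t ∂π := by
      rw [cdf_eq_integral_step hμ]
      conv_lhs => rw [← hπ.1]
      exact integral_map measurable_fst.aemeasurable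
        (measurable_step measurable_id measurable_const).aestronglyMeasurable
    have e2 : cdf ν t = ∫ p, step p.2 t ∂π := by
      rw [cdf_eq_integral_step hν]
      conv_lhs => rw [← hπ.2]
      exact integral_map measurable_snd.aemeasurable
        (measurable_step measurable_id measurable_const).aestronglyMeasurable
    simp only [H]
    have i12 : Integrable (fun p : ℝ × ℝ => step p.1 t - step p.2 t) π := i1.sub i2
    rw [integral_sub i12 i3, integral_sub i1 i2, e1, e2]
  simp_rw [hlev]
  refine integral_mono_of_nonneg (ae_of_all _ fun t => abs_nonneg _) hint.integral_prod_right
    (ae_of_all _ fun t => abs_integral_le_integral_abs)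

/-- The rotated quantile coupling: for each level `α`, transport the quantile of `μ` at `u` to the
quantile of `ν` at `u - α` modulo one. -/
lemma exists_coupling_le {μ ν : Measure ℝ} [IsProbabilityMeasure μ] [IsProbabilityMeasure ν]
    (hμ : μ (Set.Ico 0 1) = 1) (hν : ν (Set.Ico 0 1) = 1) (α : ℝ) :
    ∃ π : Measure (ℝ × ℝ), IsProbabilityMeasure π ∧ IsCoupling π μ ν ∧
      ∫ p, circDist p.1 p.2 ∂π ≤ ∫ t, |cdf μ t - cdf ν t - α| ∂unif := by
  obtain ⟨X, hXm, hXlaw, hX⟩ := exists_quantile μ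
  obtain ⟨Z, hZm, hZlaw, hZ⟩ := exists_quantile ν
  let R : ℝ → ℝ := fun u => Int.fract (u - α)
  have hRm : Measurable R := measurable_fract.comp (measurable_id.sub_const α)
  let Y : ℝ → ℝ := fun u => Z (R u)
  have hYm : Measurable Y := hZm.comp hRm
  have hYlaw : unif.map Y = ν := by
    rw [← hZlaw]
    conv_rhs => rw [← map_fract_unif α, Measure.map_map hZm hRm]
    rfl
  have hXY : Measurable fun u => (X u, Y u) := hXm.prodMk hYm
  refine ⟨unif.map fun u => (X u, Y u), Measure.isProbabilityMeasure_map hXY.aemeasurable,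
    ⟨?_, ?_⟩, ?_⟩
  · rw [Measure.map_map measurable_fst hXY]; exact hXlaw
  · rw [Measure.map_map measurable_snd hXY]; exact hYlaw
  have hcd : Measurable fun p : ℝ × ℝ => circDist p.1 p.2 := by
    unfold circDist; fun_prop
  rw [integral_map hXY.aemeasurable hcd.aestronglyMeasurable]
  have hXmem : ∀ᵐ u ∂unif, X u ∈ Set.Ico (0:ℝ) 1 :=
    ae_of_ae_map hXm.aemeasurable (hXlaw.symm ▸ ae_mem_Ico hμ)
  have hYmem : ∀ᵐ u ∂unif, Y u ∈ Set.Ico (0:ℝ) 1 :=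
    ae_of_ae_map hYm.aemeasurable (hYlaw.symm ▸ ae_mem_Ico hν)
  have hR : ∀ᵐ u ∂unif, R u ∈ Set.Ioo (0:ℝ) 1 ∧
      ∀ t, Z (R u) ≤ t ↔ R u ≤ ν.real (Set.Iic t) := by
    refine ae_of_ae_map (f := R) (p := fun v => v ∈ Set.Ioo (0:ℝ) 1 ∧
      ∀ t, Z v ≤ t ↔ v ≤ ν.real (Set.Iic t)) hRm.aemeasurable ?_
    rw [map_fract_unif α]
    exact (ae_restrict_mem measurableSet_Ioo).and hZ
  -- the path from `X u` to `Y u` winds `-⌊u - α⌋` times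
  let H : ℝ → ℝ → ℝ := fun u t => step (X u) t - step (Y u) t + ⌊u - α⌋
  have hfl : Measurable fun u : ℝ => (⌊u - α⌋ : ℝ) := by
    simp_rw [floor_eq_sub]
    exact (measurable_id.sub_const α).sub hRm
  have hHm : Measurable (Function.uncurry H) :=
    ((measurable_step (hXm.comp measurable_fst) measurable_snd).sub
      (measurable_step (hYm.comp measurable_fst) measurable_snd)).add (hfl.comp measurable_fst)
  have hsx : ∀ t, Integrable (fun u => step (X u) t) unif := fun t =>
    integrable_of_abs_le 1 (measurable_step hXm measurable_const)
      (ae_of_all _ fun u => abs_step_le _ _)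
  have hsy : ∀ t, Integrable (fun u => step (Y u) t) unif := fun t =>
    integrable_of_abs_le 1 (measurable_step hYm measurable_const)
      (ae_of_all _ fun u => abs_step_le _ _)
  have hint : Integrable (fun q : ℝ × ℝ => |H q.1 q.2|) (unif.prod unif) := by
    have h1 : Integrable (fun q : ℝ × ℝ => step (X q.1) q.2) (unif.prod unif) :=
      integrable_of_abs_le 1 (measurable_step (hXm.comp measurable_fst) measurable_snd)
        (ae_of_all _ fun u => abs_step_le _ _)
    have h2 : Integrable (fun q : ℝ × ℝ => step (Y q.1) q.2) (unif.prod unif) :=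
      integrable_of_abs_le 1 (measurable_step (hYm.comp measurable_fst) measurable_snd)
        (ae_of_all _ fun u => abs_step_le _ _)
    exact ((h1.sub h2).add ((integrable_floor_unif α).comp_fst unif)).abs
  have hstep1 : ∫ u, circDist (X u) (Y u) ∂unif ≤ ∫ u, ∫ t, |H u t| ∂unif ∂unif := by
    refine integral_mono_of_nonneg ?_ hint.integral_prod_left ?_
    · filter_upwards [hXmem, hYmem] with u h1 h2
      have : |X u - Y u| ≤ 1 :=
        abs_le.2 ⟨by linarith [h1.1, h2.2], by linarith [h1.2, h2.1]⟩
      exact le_min (abs_nonneg _) (sub_nonneg.2 this)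
    · filter_upwards [hXmem, hYmem] with u h1 h2
      have := circDist_le (-⌊u - α⌋) (Set.Ico_subset_Icc_self h1) (Set.Ico_subset_Icc_self h2)
      simpa [H] using this
  refine hstep1.trans (le_of_eq ?_)
  rw [integral_integral_swap hint]
  refine integral_congr_ae (ae_of_all _ fun t => ?_)
  refine integral_abs_of_sign ?_ ?_
  · have e1 : cdf μ t = ∫ u, step (X u) t ∂unif := by
      rw [cdf_eq_integral_step hμ]
      conv_lhs => rw [← hXlaw]
      exact integral_map hXm.aemeasurable
        (measurable_step measurable_id measurable_const).aestronglyMeasurable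
    have e2 : cdf ν t = ∫ u, step (Y u) t ∂unif := by
      rw [cdf_eq_integral_step hν]
      conv_lhs => rw [← hYlaw]
      exact integral_map hYm.aemeasurable
        (measurable_step measurable_id measurable_const).aestronglyMeasurable
    simp only [H]
    have hsxy : Integrable (fun u => step (X u) t - step (Y u) t) unif := (hsx t).sub (hsy t)
    rw [integral_add hsxy (integrable_floor_unif α),
      integral_sub (hsx t) (hsy t), integral_floor_unif, e1, e2]
    ring
  · rw [cdf_eq_real_Iic hμ, cdf_eq_real_Iic hν]
    filter_upwards [hX, hR, ae_restrict_mem measurableSet_Ioo] with u h1 h2 hu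
    have e1 : step (X u) t = step u (μ.real (Set.Iic t)) := by simp [step, h1 t]
    have e2 : step (Y u) t = step (R u) (ν.real (Set.Iic t)) := by simp [step, Y, h2.2 t]
    simp only [H]
    rw [e1, e2]
    exact floor_sign measureReal_nonneg measureReal_le_one measureReal_nonneg measureReal_le_one
      hu h2.1.1

/-- For Borel probability measures `μ, ν` on `[0,1)`,
`COT(μ,ν) = inf_{α ∈ ℝ} ∫₀¹ |F_μ(t) − F_ν(t) − α| dt`. -/
theorem cot_eq_inf_levCost (μ ν : Measure ℝ)
    [IsProbabilityMeasure μ] [IsProbabilityMeasure ν]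
    (hμ : μ (Set.Ico 0 1) = 1) (hν : ν (Set.Ico 0 1) = 1) :
    COT μ ν = ⨅ α : ℝ, ∫ t in Set.Ico (0:ℝ) 1, |cdf μ t - cdf ν t - α| := by
  rw [unif_eq_Ico]
  have hbdd : BddBelow (Set.range fun α : ℝ => ∫ t, |cdf μ t - cdf ν t - α| ∂unif) :=
    ⟨0, by rintro _ ⟨α, rfl⟩; exact integral_nonneg fun t => abs_nonneg _⟩
  have hlow : ∀ r ∈ { r : ℝ | ∃ π : Measure (ℝ × ℝ), IsProbabilityMeasure π ∧ IsCoupling π μ ν ∧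
      r = ∫ p, circDist p.1 p.2 ∂π }, ⨅ α : ℝ, ∫ t, |cdf μ t - cdf ν t - α| ∂unif ≤ r := by
    rintro _ ⟨π, hπ, hc, rfl⟩
    obtain ⟨α, hα⟩ := exists_levCost_le hμ hν hc
    exact (ciInf_le hbdd α).trans hα
  refine le_antisymm (le_ciInf fun α => ?_) ?_
  · obtain ⟨π, hπ, hc, hle⟩ := exists_coupling_le hμ hν α
    exact (csInf_le ⟨_, hlow⟩ ⟨π, hπ, hc, rfl⟩).trans hle
  · obtain ⟨π, hπ, hc, -⟩ := exists_coupling_le hμ hν 0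
    exact le_csInf ⟨_, π, hπ, hc, rfl⟩ hlow

end
end

section
/- The level median is directionally Hadamard differentiable at the zero function with derivative equal to itself: for every bounded measurable Δ : [0,1) → ℝ, every sequence of positive reals t_n → 0, and every sequence of bounded measurable functions Δ_n : [0,1) → ℝ with sup_{t ∈ [0,1)} |Δ_n(t) − Δ(t)| → 0, one has LevMed(t_n·Δ_n)/t_n → LevMed(Δ) as n → ∞. -/
/-!
The level median is already `1`-Lipschitz for the sup norm and positively homogeneous, which gives
the Hadamard derivative at zero: `levMed (τₙ • Δₙ) / τₙ = levMed Δₙ` for `τₙ > 0`, and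
`|levMed Δₙ - levMed Δ| ≤ sup |Δₙ - Δ| → 0`.

The Lipschitz bound is a monotone comparative statics argument. The kernel `|x - α|` is submodular:
`|x - b| + |y - a| ≤ |x - a| + |y - b|` whenever `x ≤ y` and `b ≤ a`
(`abs_sub_add_abs_sub_le`). Suppose `f ≤ g + c`, let `a`, `b` be the smallest minimizers for `f`
and `g`, and suppose `b + c < a`. Integrating the inequality shows that `b + c` minimizes the cost
of `f`, against the minimality of `a`. Hence `levMed f ≤ levMed g + c` (`levMed_le_add`). This
needs the infimum defining `levMed` to be attained (`levMed_isLeast`), which follows from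
continuity and coercivity of the cost.
-/

open MeasureTheory Filter
open scoped ENNReal NNReal

noncomputable section

/-- Cost functional `φ(α) = ∫₀¹ |f t − α| dt`. -/
def levCost (f : ℝ → ℝ) (α : ℝ) : ℝ := ∫ t in Set.Ico (0:ℝ) 1, |f t - α|

/-- The level median: the smallest minimizer of `α ↦ ∫₀¹ |f t − α| dt`. -/
def levMed (f : ℝ → ℝ) : ℝ := sInf {α : ℝ | ∀ β : ℝ, levCost f α ≤ levCost f β}

/-- Submodularity of the kernel `(x, α) ↦ |x - α|`. -/
lemma abs_sub_add_abs_sub_le {x y a b : ℝ} (hxy : x ≤ y) (hba : b ≤ a) :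
    |x - b| + |y - a| ≤ |x - a| + |y - b| := by
  rcases abs_cases (x - b) with h1 | h1 <;> rcases abs_cases (y - a) with h2 | h2 <;>
  rcases abs_cases (x - a) with h3 | h3 <;> rcases abs_cases (y - b) with h4 | h4 <;> linarith

lemma integrableOn_abs_sub {f : ℝ → ℝ} (hf : Measurable f) {M : ℝ}
    (hM : ∀ t ∈ Set.Ico (0:ℝ) 1, |f t| ≤ M) (α : ℝ) :
    IntegrableOn (fun t => |f t - α|) (Set.Ico (0:ℝ) 1) := by
  refine Measure.integrableOn_of_bounded (M := M + |α|) (by simp)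
    (by fun_prop) ?_
  filter_upwards [ae_restrict_mem measurableSet_Ico] with t ht
  rw [Real.norm_eq_abs, abs_abs]
  exact (abs_sub _ _).trans (by gcongr; exact hM t ht)

/-- The cost is `1`-Lipschitz, since `[0,1)` has measure one. -/
lemma levCost_le_add {f : ℝ → ℝ} (hf : Measurable f) {M : ℝ}
    (hM : ∀ t ∈ Set.Ico (0:ℝ) 1, |f t| ≤ M) (α β : ℝ) :
    levCost f α ≤ levCost f β + |α - β| := by
  have h : levCost f β + |α - β| = ∫ t in Set.Ico (0:ℝ) 1, (|f t - β| + |α - β|) := by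
    rw [integral_add (integrableOn_abs_sub hf hM β) (by simp)]
    simp [levCost]
  rw [h]
  refine integral_mono (integrableOn_abs_sub hf hM α)
    ((integrableOn_abs_sub hf hM β).add (by simp)) fun t => ?_
  have := abs_sub_le (f t) β α
  rwa [abs_sub_comm β α] at this

lemma continuous_levCost {f : ℝ → ℝ} (hf : Measurable f) {M : ℝ}
    (hM : ∀ t ∈ Set.Ico (0:ℝ) 1, |f t| ≤ M) : Continuous (levCost f) :=
  (LipschitzWith.of_le_add fun α β => levCost_le_add hf hM α β).continuous

/-- Coercivity of the cost. -/
lemma abs_sub_le_levCost {f : ℝ → ℝ} (hf : Measurable f) {M : ℝ}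
    (hM : ∀ t ∈ Set.Ico (0:ℝ) 1, |f t| ≤ M) (α : ℝ) : |α| - M ≤ levCost f α := by
  have h : |α| - M = ∫ _ in Set.Ico (0:ℝ) 1, (|α| - M) := by simp
  rw [h]
  refine setIntegral_mono_on (by simp) (integrableOn_abs_sub hf hM α) measurableSet_Ico
    fun t ht => ?_
  have h1 := abs_sub_abs_le_abs_sub α (f t)
  rw [abs_sub_comm] at h1
  linarith [hM t ht]

/-- The infimum defining the level median of a bounded measurable function is attained. -/
lemma levMed_isLeast {f : ℝ → ℝ} (hf : Measurable f) {M : ℝ}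
    (hM : ∀ t ∈ Set.Ico (0:ℝ) 1, |f t| ≤ M) :
    IsLeast {α : ℝ | ∀ β : ℝ, levCost f α ≤ levCost f β} (levMed f) := by
  have hcont := continuous_levCost hf hM
  have hclosed : IsClosed {α : ℝ | ∀ β : ℝ, levCost f α ≤ levCost f β} := by
    simp only [Set.ofPred_forall]
    exact isClosed_iInter fun β => isClosed_le hcont continuous_const
  have hne : {α : ℝ | ∀ β : ℝ, levCost f α ≤ levCost f β}.Nonempty := by
    refine hcont.exists_forall_le (tendsto_atTop_mono (abs_sub_le_levCost hf hM) ?_)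
    exact tendsto_atTop_add_const_right _ (-M) (tendsto_norm_cocompact_atTop (E := ℝ))
  have hbdd : BddBelow {α : ℝ | ∀ β : ℝ, levCost f α ≤ levCost f β} := by
    refine ⟨-(levCost f 0 + M), fun α hα => ?_⟩
    have h1 := abs_sub_le_levCost hf hM α
    have h2 := hα 0
    linarith [neg_abs_le α]
  exact ⟨hclosed.csInf_mem hne hbdd, fun α hα => csInf_le hbdd hα⟩

/-- Monotonicity and translation equivariance of the level median, in one statement. -/
lemma levMed_le_add {f g : ℝ → ℝ} (hf : Measurable f) (hg : Measurable g) {M N c : ℝ}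
    (hM : ∀ t ∈ Set.Ico (0:ℝ) 1, |f t| ≤ M) (hN : ∀ t ∈ Set.Ico (0:ℝ) 1, |g t| ≤ N)
    (hfg : ∀ t ∈ Set.Ico (0:ℝ) 1, f t ≤ g t + c) : levMed f ≤ levMed g + c := by
  obtain ⟨hfmin, hfleast⟩ := levMed_isLeast hf hM
  obtain ⟨hgmin, -⟩ := levMed_isLeast hg hN
  set a := levMed f
  set b := levMed g
  by_contra! hlt
  have key : levCost f (b + c) + levCost g (a - c) ≤ levCost f a + levCost g b := by
    simp only [levCost]
    rw [← integral_add (integrableOn_abs_sub hf hM _) (integrableOn_abs_sub hg hN _),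
      ← integral_add (integrableOn_abs_sub hf hM _) (integrableOn_abs_sub hg hN _)]
    refine setIntegral_mono_on
      ((integrableOn_abs_sub hf hM _).add (integrableOn_abs_sub hg hN _))
      ((integrableOn_abs_sub hf hM _).add (integrableOn_abs_sub hg hN _)) measurableSet_Ico
      fun t ht => ?_
    have h := abs_sub_add_abs_sub_le (hfg t ht) hlt.le
    rwa [show g t + c - a = g t - (a - c) by ring,
      show g t + c - (b + c) = g t - b by ring] at h
  have hmem : b + c ∈ {α : ℝ | ∀ β : ℝ, levCost f α ≤ levCost f β} := fun β => by
    linarith [hgmin (a - c), hfmin β]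
  exact absurd (hfleast hmem) (not_le.mpr hlt)

lemma levCost_mul {s : ℝ} (hs : 0 < s) (f : ℝ → ℝ) (α : ℝ) :
    levCost (fun t => s * f t) (s * α) = s * levCost f α := by
  simp only [levCost, ← mul_sub, abs_mul, abs_of_pos hs, integral_const_mul]

/-- Positive homogeneity of the level median; it needs no boundedness, as the sets of minimizers
correspond exactly and `sInf` on `ℝ` commutes with scaling. -/
lemma levMed_mul {s : ℝ} (hs : 0 < s) (f : ℝ → ℝ) :
    levMed (fun t => s * f t) = s * levMed f := by
  open scoped Pointwise in
  have hset : {α : ℝ | ∀ β : ℝ, levCost (fun t => s * f t) α ≤ levCost (fun t => s * f t) β} =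
      s • {α : ℝ | ∀ β : ℝ, levCost f α ≤ levCost f β} := by
    ext α
    have hscale (γ : ℝ) : levCost (fun t => s * f t) γ = s * levCost f (s⁻¹ * γ) := by
      rw [← levCost_mul hs, mul_inv_cancel_left₀ hs.ne']
    rw [Set.mem_smul_set_iff_inv_smul_mem₀ hs.ne']
    simp only [Set.mem_ofPred_eq, hscale, smul_eq_mul, mul_le_mul_iff_right₀ hs]
    refine ⟨fun h β => ?_, fun h β => h _⟩
    simpa [inv_mul_cancel_left₀ hs.ne'] using h (s * β)
  rw [levMed, hset, Real.sInf_smul_of_nonneg hs.le, smul_eq_mul, levMed]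

/-- The level median is directionally Hadamard differentiable at the zero
function with derivative equal to itself: for every bounded measurable `Δ`, every sequence of
positive reals `tₙ → 0`, and every sequence of bounded measurable `Δₙ` converging uniformly
on `[0,1)` to `Δ`, one has `LevMed(tₙ·Δₙ)/tₙ → LevMed(Δ)`. -/
theorem levMed_hadamard_at_zero
    (Δ : ℝ → ℝ) (hΔ : Measurable Δ)
    (M : ℝ) (hM : ∀ t ∈ Set.Ico (0:ℝ) 1, |Δ t| ≤ M)
    (τ : ℕ → ℝ) (hτ_pos : ∀ n, 0 < τ n) (hτ : Tendsto τ atTop (nhds 0))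
    (Δn : ℕ → ℝ → ℝ) (hΔn_meas : ∀ n, Measurable (Δn n))
    (hΔn_bdd : ∀ n, ∃ Mn : ℝ, ∀ t ∈ Set.Ico (0:ℝ) 1, |Δn n t| ≤ Mn)
    (hΔn : TendstoUniformlyOn Δn Δ atTop (Set.Ico (0:ℝ) 1)) :
    Tendsto (fun n => levMed (fun t => τ n * Δn n t) / τ n) atTop (nhds (levMed Δ)) := by
  have hscale (n : ℕ) : levMed (fun t => τ n * Δn n t) / τ n = levMed (Δn n) := by
    rw [levMed_mul (hτ_pos n), mul_div_cancel_left₀ _ (hτ_pos n).ne']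
  simp only [hscale]
  rw [Metric.tendsto_nhds]
  intro ε hε
  filter_upwards [Metric.tendstoUniformlyOn_iff.mp hΔn (ε / 2) (half_pos hε)] with n hn
  obtain ⟨Mn, hMn⟩ := hΔn_bdd n
  have hclose : ∀ t ∈ Set.Ico (0:ℝ) 1, |Δ t - Δn n t| < ε / 2 := hn
  have h1 : levMed (Δn n) ≤ levMed Δ + ε / 2 :=
    levMed_le_add (hΔn_meas n) hΔ hMn hM fun t ht => by linarith [(abs_lt.mp (hclose t ht)).1]
  have h2 : levMed Δ ≤ levMed (Δn n) + ε / 2 :=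
    levMed_le_add hΔ (hΔn_meas n) hM hMn fun t ht => by linarith [(abs_lt.mp (hclose t ht)).2]
  rw [Real.dist_eq, abs_lt]
  constructor <;> linarith

end
end

section
/- Let F : [0,1] → [0,1] be a nondecreasing function, let G : [0,1] → ℝ be continuous, and suppose the set {t ∈ (0,1) : G(t) = m} is finite and equal to {t_1 < t_2 < … < t_N}, where m = LevMed(G restricted to [0,1)); set t_0 = 0, t_{N+1} = 1 and H(t) = sign(G(t) − m). Then ∫₀¹∫₀¹ H(s)H(t)·(F(min(s,t)) − F(s)F(t)) ds dt = Σ_{i=0}^{N} ∫_{t_i}^{t_{i+1}} ∫_{t_i}^{t_{i+1}} F(min(s,s̃)) ds ds̃ + 2 Σ_{i=1}^{N} Σ_{j=0}^{i−1} H((t_{i+1}+t_i)/2)·H((t_{j+1}+t_j)/2)·(t_{i+1} − t_i)·∫_{t_j}^{t_{j+1}} F(s) ds − ( ∫₀¹ H(s)F(s) ds )². -/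
/-!
Since `G - m` is continuous and does not vanish between consecutive intersection points, its sign
`H` equals a constant `h i = ±1` on each `(ts i, ts (i + 1))`. Hence integrating against `H` is the
same as taking the sum of the integrals over the pieces, weighted by the `h i`
(`integral_step_mul`), and the variance integral becomes
`∑ i, ∑ j, h i * h j * ∫_{piece i} ∫_{piece j} F (min s t) dt ds - (∫ H F)²`.
On an off-diagonal rectangle `min s t` is always the variable lying in the left-hand piece, so the
double integral is the length of the right-hand piece times the integral of `F` over the left-hand
one; the double sum is therefore symmetric and folds onto its lower triangle. On the diagonal
`h i * h i = 1`.

Integrability costs nothing once `F` is replaced by its monotone extension to `ℝ`: then both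
`F (min s ·)` and `s ↦ ∫ F (min s t) dt` are monotone.
-/

open MeasureTheory Filter
open scoped ENNReal NNReal

noncomputable section

lemma sum_sum_symm (c : ℕ → ℕ → ℝ) (hc : ∀ i j, c i j = c j i) (n : ℕ) :
    ∑ i ∈ Finset.range n, ∑ j ∈ Finset.range n, c i j =
      ∑ i ∈ Finset.range n, c i i +
        2 * ∑ i ∈ Finset.range n, ∑ j ∈ Finset.range i, c i j := by
  induction n with
  | zero => simp
  | succ n ih =>
    simp only [Finset.sum_range_succ, Finset.sum_add_distrib]
    rw [ih, Finset.sum_congr rfl fun i _ => hc i n]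
    ring

/-- Weighting by a function that is piecewise constant off the nodes preserves integrability, and
the integral splits along the pieces. -/
lemma integral_step_mul (H : ℝ → ℝ) (ts h : ℕ → ℝ) (n : ℕ)
    (hts : ∀ i < n, ts i ≤ ts (i + 1))
    (hH : ∀ i < n, ∀ t ∈ Set.Ioo (ts i) (ts (i + 1)), H t = h i)
    (K : ℝ → ℝ) (hK : ∀ a b, IntervalIntegrable K volume a b) :
    IntervalIntegrable (fun t => H t * K t) volume (ts 0) (ts n) ∧
      ∫ t in (ts 0)..(ts n), H t * K t =
        ∑ i ∈ Finset.range n, h i * ∫ t in (ts i)..(ts (i + 1)), K t := by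
  have hae : ∀ i < n, ∀ᵐ t, t ∈ Set.uIoc (ts i) (ts (i + 1)) → h i * K t = H t * K t := by
    intro i hi
    -- the right endpoint may be a node, where `H` need not equal `h i`
    filter_upwards [Measure.ae_ne volume (ts (i + 1))] with t ht hmem
    rw [Set.uIoc_of_le (hts i hi)] at hmem
    rw [hH i hi t ⟨hmem.1, lt_of_le_of_ne hmem.2 ht⟩]
  have hint : ∀ i < n,
      IntervalIntegrable (fun t => H t * K t) volume (ts i) (ts (i + 1)) := fun i hi =>
    ((hK _ _).const_mul (h i)).congr_ae
      ((ae_restrict_iff' measurableSet_uIoc).2 (hae i hi))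
  refine ⟨IntervalIntegrable.trans_iterate hint, ?_⟩
  rw [← intervalIntegral.sum_integral_adjacent_intervals hint]
  refine Finset.sum_congr rfl fun i hi => ?_
  rw [← intervalIntegral.integral_const_mul]
  exact (intervalIntegral.integral_congr_ae (hae i (Finset.mem_range.1 hi))).symm

lemma monotone_integral_min (F : ℝ → ℝ) (hF : Monotone F) {a b : ℝ} (hab : a ≤ b) :
    Monotone fun s => ∫ t in a..b, F (min s t) := by
  have hm : ∀ s, Monotone fun t => F (min s t) := fun s x y hxy =>
    hF (min_le_min_left s hxy)
  intro x y hxy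
  exact intervalIntegral.integral_mono_on hab (hm x).intervalIntegrable
    (hm y).intervalIntegrable fun t _ => hF (min_le_min_right t hxy)

/-- Double integral of `F (min s t)` over a rectangle whose `t`-side lies to the left. -/
lemma integral_min_left (F : ℝ → ℝ) {a b c d : ℝ} (hab : a ≤ b) (hbc : b ≤ c) (hcd : c ≤ d) :
    ∫ s in c..d, ∫ t in a..b, F (min s t) = (d - c) * ∫ t in a..b, F t := by
  have : ∫ s in c..d, ∫ t in a..b, F (min s t) = ∫ s in c..d, ∫ t in a..b, F t := by
    refine intervalIntegral.integral_congr fun s hs => intervalIntegral.integral_congr fun t ht => ?_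
    rw [Set.uIcc_of_le hcd] at hs
    rw [Set.uIcc_of_le hab] at ht
    simp only [min_eq_right (ht.2.trans (hbc.trans hs.1))]
  rw [this, intervalIntegral.integral_const, smul_eq_mul]

/-- Double integral of `F (min s t)` over a rectangle whose `s`-side lies to the left. -/
lemma integral_min_right (F : ℝ → ℝ) {a b c d : ℝ} (hab : a ≤ b) (hbc : b ≤ c) (hcd : c ≤ d) :
    ∫ s in a..b, ∫ t in c..d, F (min s t) = (d - c) * ∫ s in a..b, F s := by
  rw [← intervalIntegral.integral_const_mul]
  refine intervalIntegral.integral_congr fun s hs => ?_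
  rw [Set.uIcc_of_le hab] at hs
  have : ∫ t in c..d, F (min s t) = ∫ t in c..d, F s := by
    refine intervalIntegral.integral_congr fun t ht => ?_
    rw [Set.uIcc_of_le hcd] at ht
    simp only [min_eq_left (hs.2.trans (hbc.trans ht.1))]
  simp only [this, intervalIntegral.integral_const, smul_eq_mul]

/-- The decomposition for an arbitrary monotone `F` on `ℝ` and an arbitrary function `H` that is
constant equal to `h i = ±1` strictly between consecutive nodes. -/
lemma decomposition_of_monotone (F H : ℝ → ℝ) (hF : Monotone F) (ts h : ℕ → ℝ) (n : ℕ)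
    (hts : MonotoneOn ts (Set.Iic n)) (hh : ∀ i < n, h i * h i = 1)
    (hH : ∀ i < n, ∀ t ∈ Set.Ioo (ts i) (ts (i + 1)), H t = h i) :
    (∫ s in (ts 0)..(ts n), ∫ t in (ts 0)..(ts n), H s * H t * (F (min s t) - F s * F t)) =
      (∑ i ∈ Finset.range n, ∫ s in (ts i)..(ts (i + 1)),
          ∫ t in (ts i)..(ts (i + 1)), F (min s t)) +
        2 * (∑ i ∈ Finset.range n, ∑ j ∈ Finset.range i,
          h i * h j * (ts (i + 1) - ts i) * ∫ s in (ts j)..(ts (j + 1)), F s) -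
        (∫ s in (ts 0)..(ts n), H s * F s) ^ 2 := by
  have hle : ∀ i j, i ≤ j → j ≤ n → ts i ≤ ts j := fun i j hij hj =>
    hts (Set.mem_Iic.2 (hij.trans hj)) (Set.mem_Iic.2 hj) hij
  have hts' : ∀ i < n, ts i ≤ ts (i + 1) := fun i hi => hle _ _ (Nat.le_succ i) hi
  have key := integral_step_mul H ts h n hts' hH
  have hFi : ∀ a b, IntervalIntegrable F volume a b := fun a b => hF.intervalIntegrable
  have hmi : ∀ s a b, IntervalIntegrable (fun t => F (min s t)) volume a b := fun s a b =>
    Monotone.intervalIntegrable fun x y hxy => hF (min_le_min_left s hxy)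
  have hJi : ∀ j ∈ Finset.range n, ∀ a b, IntervalIntegrable
      (fun s => h j * ∫ t in (ts j)..(ts (j + 1)), F (min s t)) volume a b := fun j hj a b =>
    (monotone_integral_min F hF
      (hts' j (Finset.mem_range.1 hj))).intervalIntegrable.const_mul _
  have hKi : ∀ a b, IntervalIntegrable (fun s => ∑ j ∈ Finset.range n,
      h j * ∫ t in (ts j)..(ts (j + 1)), F (min s t)) volume a b := fun a b => by
    have := IntervalIntegrable.sum (Finset.range n) fun j hj => hJi j hj a b
    simpa only [Finset.sum_fn] using this
  set A := ∫ s in (ts 0)..(ts n), H s * F s with hA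
  have hinner : ∀ s, ∫ t in (ts 0)..(ts n), H s * H t * (F (min s t) - F s * F t) =
      H s * (∑ j ∈ Finset.range n, h j * ∫ t in (ts j)..(ts (j + 1)), F (min s t)) -
        A * (H s * F s) := by
    intro s
    have e : ∀ t, H s * H t * (F (min s t) - F s * F t) =
        H s * (H t * F (min s t)) - (H s * F s) * (H t * F t) := fun t => by ring
    simp only [e]
    rw [intervalIntegral.integral_sub ((key _ (hmi s)).1.const_mul _)
      ((key F hFi).1.const_mul _), intervalIntegral.integral_const_mul,
      intervalIntegral.integral_const_mul, (key _ (hmi s)).2, ← hA]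
    ring
  simp only [hinner]
  rw [intervalIntegral.integral_sub (key _ hKi).1 ((key F hFi).1.const_mul _),
    intervalIntegral.integral_const_mul, ← hA, (key _ hKi).2]
  -- the weighted double integral over the `(i, j)` rectangle, in a form visibly symmetric in `i, j`
  let c : ℕ → ℕ → ℝ := fun i j => if i = j then
      ∫ s in (ts i)..(ts (i + 1)), ∫ t in (ts i)..(ts (i + 1)), F (min s t)
    else h i * h j * (ts (max i j + 1) - ts (max i j)) *
      ∫ s in (ts (min i j))..(ts (min i j + 1)), F s
  have hc : ∀ i j, c i j = c j i := by
    intro i j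
    by_cases hij : i = j
    · rw [hij]
    · simp only [c, if_neg hij, if_neg (Ne.symm hij), max_comm i j, min_comm i j, mul_comm (h i)]
  have hdouble : ∑ i ∈ Finset.range n, h i * ∫ s in (ts i)..(ts (i + 1)),
      ∑ j ∈ Finset.range n, h j * ∫ t in (ts j)..(ts (j + 1)), F (min s t) =
      ∑ i ∈ Finset.range n, ∑ j ∈ Finset.range n, c i j := by
    refine Finset.sum_congr rfl fun i hi => ?_
    rw [intervalIntegral.integral_finsetSum fun j hj => hJi j hj _ _, Finset.mul_sum]
    refine Finset.sum_congr rfl fun j hj => ?_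
    rw [intervalIntegral.integral_const_mul, ← mul_assoc]
    have hi' := Finset.mem_range.1 hi
    have hj' := Finset.mem_range.1 hj
    rcases lt_trichotomy i j with hij | hij | hij
    · simp only [c, if_neg hij.ne, max_eq_right hij.le, min_eq_left hij.le]
      rw [integral_min_right F (hts' i hi') (hle _ _ hij hj'.le) (hts' j hj')]
      ring
    · subst hij
      simp [c, hh i hi']
    · simp only [c, if_neg hij.ne', max_eq_left hij.le, min_eq_right hij.le]
      rw [integral_min_left F (hts' j hj') (hle _ _ hij hi'.le) (hts' i hi')]
      ring
  have hlow : ∑ i ∈ Finset.range n, ∑ j ∈ Finset.range i, c i j =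
      ∑ i ∈ Finset.range n, ∑ j ∈ Finset.range i,
        h i * h j * (ts (i + 1) - ts i) * ∫ s in (ts j)..(ts (j + 1)), F s := by
    refine Finset.sum_congr rfl fun i _ => Finset.sum_congr rfl fun j hj => ?_
    have hij := Finset.mem_range.1 hj
    simp only [c, if_neg hij.ne', max_eq_left hij.le, min_eq_right hij.le]
  rw [hdouble, sum_sum_symm c hc, hlow]
  simp only [c, if_true]
  ring

lemma sign_eq_of_ne_zero {g : ℝ → ℝ} {a b : ℝ} (hg : ContinuousOn g (Set.Ioo a b))
    (hne : ∀ t ∈ Set.Ioo a b, g t ≠ 0) {x y : ℝ} (hx : x ∈ Set.Ioo a b)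
    (hy : y ∈ Set.Ioo a b) : Real.sign (g x) = Real.sign (g y) := by
  have hpre : IsPreconnected (Set.Ioo a b) := isPreconnected_Ioo
  rcases lt_or_gt_of_ne (hne x hx) with h1 | h1 <;> rcases lt_or_gt_of_ne (hne y hy) with h2 | h2
  · rw [Real.sign_of_neg h1, Real.sign_of_neg h2]
  · obtain ⟨z, hz, hz0⟩ := hpre.intermediate_value hx hy hg ⟨h1.le, h2.le⟩
    exact absurd hz0 (hne z hz)
  · obtain ⟨z, hz, hz0⟩ := hpre.intermediate_value hy hx hg ⟨h2.le, h1.le⟩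
    exact absurd hz0 (hne z hz)
  · rw [Real.sign_of_pos h1, Real.sign_of_pos h2]

/-- Decomposition of the variance integral
`∫₀¹∫₀¹ H(s)H(t)(F(min(s,t)) − F(s)F(t)) ds dt` along the intersection points
`0 = t₀ < t₁ < … < t_N < t_{N+1} = 1` of `G` with its level median `m`,
where `H(t) = sign(G(t) − m)`. -/
theorem variance_integral_decomposition
    (F G : ℝ → ℝ)
    (hF_mono : MonotoneOn F (Set.Icc (0:ℝ) 1))
    (hF_range : ∀ t ∈ Set.Icc (0:ℝ) 1, F t ∈ Set.Icc (0:ℝ) 1)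
    (hG_cont : ContinuousOn G (Set.Icc (0:ℝ) 1))
    (N : ℕ) (ts : ℕ → ℝ)
    (h0 : ts 0 = 0) (hlast : ts (N + 1) = 1)
    (hmono : StrictMonoOn ts (Set.Iic (N + 1)))
    (hinter : {t ∈ Set.Ioo (0:ℝ) 1 | G t = levMed G} = ts '' Set.Icc 1 N) :
    (∫ s in (0:ℝ)..1, ∫ t in (0:ℝ)..1,
        Real.sign (G s - levMed G) * Real.sign (G t - levMed G) *
          (F (min s t) - F s * F t)) =
      (∑ i ∈ Finset.range (N + 1),
          ∫ s in (ts i)..(ts (i + 1)), ∫ s' in (ts i)..(ts (i + 1)), F (min s s')) +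
        2 * (∑ i ∈ Finset.Icc 1 N, ∑ j ∈ Finset.range i,
          Real.sign (G ((ts (i + 1) + ts i) / 2) - levMed G) *
            Real.sign (G ((ts (j + 1) + ts j) / 2) - levMed G) *
            (ts (i + 1) - ts i) * ∫ s in (ts j)..(ts (j + 1)), F s) -
        (∫ s in (0:ℝ)..1, Real.sign (G s - levMed G) * F s) ^ 2 := by
  have hle : ∀ i j, i ≤ j → j ≤ N + 1 → ts i ≤ ts j := fun i j hij hj =>
    hmono.monotoneOn (Set.mem_Iic.2 (hij.trans hj)) (Set.mem_Iic.2 hj) hij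
  have hsub : ∀ i < N + 1, Set.Icc (ts i) (ts (i + 1)) ⊆ Set.Icc 0 1 := fun i hi =>
    Set.Icc_subset_Icc (h0 ▸ hle 0 i (Nat.zero_le _) hi.le) (hlast ▸ hle (i + 1) _ hi le_rfl)
  have hsub' : ∀ i < N + 1, Set.Ioo (ts i) (ts (i + 1)) ⊆ Set.Ioo 0 1 := fun i hi =>
    Set.Ioo_subset_Ioo (h0 ▸ hle 0 i (Nat.zero_le _) hi.le) (hlast ▸ hle (i + 1) _ hi le_rfl)
  have hne : ∀ i < N + 1, ∀ t ∈ Set.Ioo (ts i) (ts (i + 1)), G t - levMed G ≠ 0 := by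
    intro i hi t ht h
    have hmem : t ∈ ts '' Set.Icc 1 N := hinter ▸ ⟨hsub' i hi ht, sub_eq_zero.1 h⟩
    obtain ⟨k, hk, rfl⟩ := hmem
    have hk' : k ∈ Set.Iic (N + 1) := Set.mem_Iic.2 (hk.2.trans (Nat.le_succ N))
    have h1 := (hmono.lt_iff_lt (Set.mem_Iic.2 hi.le) hk').1 ht.1
    have h2 := (hmono.lt_iff_lt hk' (Set.mem_Iic.2 hi)).1 ht.2
    omega
  have hmid : ∀ i < N + 1, (ts (i + 1) + ts i) / 2 ∈ Set.Ioo (ts i) (ts (i + 1)) := by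
    intro i hi
    have := hmono (Set.mem_Iic.2 hi.le) (Set.mem_Iic.2 hi) (Nat.lt_succ_self i)
    constructor <;> linarith
  set F' : ℝ → ℝ := Set.IccExtend zero_le_one (fun t : Set.Icc (0:ℝ) 1 => F t) with hF'
  have hF'm : Monotone F' := Monotone.IccExtend _ fun x y hxy => hF_mono x.2 y.2 hxy
  have hFF : ∀ t ∈ Set.Icc (0:ℝ) 1, F t = F' t := fun t ht => by
    rw [hF', Set.IccExtend_of_mem _ _ ht]
  have hmin : ∀ s ∈ Set.Icc (0:ℝ) 1, ∀ t ∈ Set.Icc (0:ℝ) 1, F (min s t) = F' (min s t) :=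
    fun s hs t ht => hFF _ ⟨le_min hs.1 ht.1, (min_le_left _ _).trans hs.2⟩
  have main := decomposition_of_monotone F' (fun t => Real.sign (G t - levMed G)) hF'm ts
    (fun i => Real.sign (G ((ts (i + 1) + ts i) / 2) - levMed G)) (N + 1) hmono.monotoneOn
    (fun i hi => by
      rcases Real.sign_apply_eq_of_ne_zero _ (hne i hi _ (hmid i hi)) with h | h <;>
        simp [h])
    (fun i hi t ht => sign_eq_of_ne_zero
      ((hG_cont.mono (Set.Ioo_subset_Icc_self.trans (hsub i hi))).sub continuousOn_const)
      (hne i hi) ht (hmid i hi))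
  rw [h0, hlast] at main
  have hu : Set.uIcc (0:ℝ) 1 = Set.Icc 0 1 := Set.uIcc_of_le zero_le_one
  have hui : ∀ i < N + 1, Set.uIcc (ts i) (ts (i + 1)) ⊆ Set.Icc 0 1 := fun i hi => by
    rw [Set.uIcc_of_le (hle _ _ (Nat.le_succ i) hi)]
    exact hsub i hi
  have hL : (∫ s in (0:ℝ)..1, ∫ t in (0:ℝ)..1,
        Real.sign (G s - levMed G) * Real.sign (G t - levMed G) * (F (min s t) - F s * F t)) =
      ∫ s in (0:ℝ)..1, ∫ t in (0:ℝ)..1,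
        Real.sign (G s - levMed G) * Real.sign (G t - levMed G) *
          (F' (min s t) - F' s * F' t) := by
    refine intervalIntegral.integral_congr fun s hs => intervalIntegral.integral_congr fun t ht => ?_
    rw [hu] at hs ht
    simp only [hmin s hs t ht, hFF s hs, hFF t ht]
  have hD : ∀ i ∈ Finset.range (N + 1),
      (∫ s in (ts i)..(ts (i + 1)), ∫ s' in (ts i)..(ts (i + 1)), F (min s s')) =
        ∫ s in (ts i)..(ts (i + 1)), ∫ s' in (ts i)..(ts (i + 1)), F' (min s s') := by
    intro i hi
    have hi' := hui i (Finset.mem_range.1 hi)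
    exact intervalIntegral.integral_congr fun s hs => intervalIntegral.integral_congr fun t ht =>
      hmin s (hi' hs) t (hi' ht)
  have hI : ∀ j < N + 1, ∫ s in (ts j)..(ts (j + 1)), F s = ∫ s in (ts j)..(ts (j + 1)), F' s :=
    fun j hj => intervalIntegral.integral_congr fun s hs => hFF s (hui j hj hs)
  have hS : ∫ s in (0:ℝ)..1, Real.sign (G s - levMed G) * F s =
      ∫ s in (0:ℝ)..1, Real.sign (G s - levMed G) * F' s := by
    refine intervalIntegral.integral_congr fun s hs => ?_
    rw [hu] at hs
    simp only [hFF s hs]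
  rw [hL, main, Finset.sum_congr rfl hD, hS]
  congr 3
  -- the row `i = 0` of the triangular sum is empty
  rw [Finset.range_eq_Ico, Finset.sum_eq_sum_Ico_succ_bot (Nat.succ_pos N), Finset.range_zero,
    Finset.sum_empty, zero_add]
  refine Finset.sum_congr rfl fun i hi => Finset.sum_congr rfl fun j hj => ?_
  rw [hI j (by simp only [Finset.mem_range, Finset.mem_Icc] at hi hj; omega)]

end
end

section
/- Let G : [0,1] → ℝ be a nonconstant continuously differentiable function whose derivative G' has only finitely many zeros in [0,1]. Then min_{t∈[0,1]} G(t) < LevMed(G restricted to [0,1)) < max_{t∈[0,1]} G(t). -/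
/-!
At the minimum value `m` of `G`, the level set `{G = m}` is Lebesgue-null: at an interior point of
it `G'` vanishes by Fermat's theorem, and `G'` has finitely many zeros. Hence the sublevel sets
`{G < c}` shrink to a null set as `c` decreases to `m`, and some `c > m` has
`volume {G < c} < 1/2`. Lowering `α` below such a `c` moves it away from more than half of the mass,
so it strictly increases the cost, and every minimizer is at least `c`
(`exists_gt_forall_levCost_lt`). The same statement for `-G` keeps all minimizers away from the
maximum. Since the cost is continuous and coercive, minimizers exist, so their infimum is strictly
between the two values.
-/

open MeasureTheory Filter
open scoped ENNReal NNReal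

noncomputable section

lemma integrableOn_abs_sub_s15 {g : ℝ → ℝ} (hg : ContinuousOn g (Set.Icc (0:ℝ) 1)) (α : ℝ) :
    IntegrableOn (fun t => |g t - α|) (Set.Ico (0:ℝ) 1) :=
  ((hg.sub continuousOn_const).abs.integrableOn_Icc).mono_set Set.Ico_subset_Icc_self

lemma levCost_neg (g : ℝ → ℝ) (α : ℝ) : levCost (fun t => -g t) (-α) = levCost g α := by
  unfold levCost
  congr 1
  ext t
  rw [← abs_neg]
  ring_nf

lemma levCost_le_add_abs_sub {g : ℝ → ℝ} (hg : ContinuousOn g (Set.Icc (0:ℝ) 1)) (α β : ℝ) :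
    levCost g α ≤ levCost g β + |α - β| := by
  have h : levCost g α ≤ ∫ t in Set.Ico (0:ℝ) 1, (|g t - β| + |α - β|) := by
    refine integral_mono (integrableOn_abs_sub_s15 hg α)
      ((integrableOn_abs_sub_s15 hg β).add (integrable_const _)) fun t => ?_
    have := abs_sub_le (g t) β α
    rwa [abs_sub_comm β α] at this
  rw [integral_add (integrableOn_abs_sub_s15 hg β) (integrable_const _)] at h
  simpa [levCost] using h

lemma continuous_levCost_s15 {g : ℝ → ℝ} (hg : ContinuousOn g (Set.Icc (0:ℝ) 1)) :
    Continuous (levCost g) := by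
  refine (LipschitzWith.of_le_add fun α β => ?_).continuous
  simpa [Real.dist_eq] using levCost_le_add_abs_sub hg α β

lemma abs_le_levCost_add {g : ℝ → ℝ} (hg : ContinuousOn g (Set.Icc (0:ℝ) 1)) (α : ℝ) :
    |α| ≤ levCost g α + levCost g 0 := by
  have h : ∫ _ in Set.Ico (0:ℝ) 1, |α| ≤ ∫ t in Set.Ico (0:ℝ) 1, (|g t - α| + |g t - 0|) := by
    refine integral_mono (integrable_const _)
      ((integrableOn_abs_sub_s15 hg α).add (integrableOn_abs_sub_s15 hg 0)) fun t => ?_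
    have := abs_sub_le α (g t) 0
    rw [abs_sub_comm α (g t)] at this
    simpa using this
  rw [integral_add (integrableOn_abs_sub_s15 hg α) (integrableOn_abs_sub_s15 hg 0)] at h
  simpa [levCost] using h

lemma exists_forall_levCost_le {g : ℝ → ℝ} (hg : ContinuousOn g (Set.Icc (0:ℝ) 1)) :
    ∃ α, ∀ β, levCost g α ≤ levCost g β := by
  refine (continuous_levCost_s15 hg).exists_forall_le ?_
  refine tendsto_atTop_mono (fun α => ?_)
    (tendsto_atTop_add_const_right _ (-levCost g 0) (tendsto_norm_cocompact_atTop (E := ℝ)))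
  have := abs_le_levCost_add hg α
  rw [Real.norm_eq_abs]
  linarith

/-- A value `c` with `volume {g < c} < 1/2` costs strictly less than every smaller value. -/
lemma levCost_lt_of_measure_lt {g : ℝ → ℝ} (hg : ContinuousOn g (Set.Icc (0:ℝ) 1)) {c : ℝ}
    (hc : (volume.restrict (Set.Ico (0:ℝ) 1)).real {t | g t < c} < 1 / 2) {α : ℝ} (hα : α < c) :
    levCost g c < levCost g α := by
  have hm : AEMeasurable g (volume.restrict (Set.Ico (0:ℝ) 1)) :=
    (hg.mono Set.Ico_subset_Icc_self).aemeasurable measurableSet_Ico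
  have hs : NullMeasurableSet {t | g t < c} (volume.restrict (Set.Ico (0:ℝ) 1)) :=
    nullMeasurableSet_lt hm aemeasurable_const
  have hi : Integrable ({t | g t < c}.indicator fun _ => 2 * (c - α))
      (volume.restrict (Set.Ico (0:ℝ) 1)) := (integrable_const _).indicator₀ hs
  -- Pointwise, `|g - c| ≤ |g - α| - (c - α)` where `g ≥ c`, and `|g - c| ≤ |g - α| + (c - α)`
  -- where `g < c`.
  have h : ∫ t in Set.Ico (0:ℝ) 1, (|g t - c| + (c - α)) ≤
      ∫ t in Set.Ico (0:ℝ) 1, (|g t - α| + {t | g t < c}.indicator (fun _ => 2 * (c - α)) t) := by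
    refine integral_mono ((integrableOn_abs_sub_s15 hg c).add (integrable_const _))
      ((integrableOn_abs_sub_s15 hg α).add hi) fun t => ?_
    by_cases ht : g t < c
    · have : t ∈ {t | g t < c} := ht
      have h2 := abs_sub_le (g t) α c
      rw [abs_of_neg (sub_neg.2 hα)] at h2
      simp only [Set.indicator_of_mem this]
      linarith
    · have : t ∉ {t | g t < c} := ht
      simp only [Set.indicator_of_notMem this]
      rw [abs_of_nonneg (by linarith : 0 ≤ g t - c), abs_of_nonneg (by linarith : 0 ≤ g t - α)]
      linarith
  rw [integral_add (integrableOn_abs_sub_s15 hg c) (integrable_const _),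
    integral_add (integrableOn_abs_sub_s15 hg α) hi, integral_indicator₀ hs, setIntegral_const,
    setIntegral_const] at h
  have hu : volume.real (Set.Ico (0:ℝ) 1) = 1 := by simp
  rw [hu, smul_eq_mul, smul_eq_mul] at h
  unfold levCost
  nlinarith [mul_lt_mul_of_pos_right hc (sub_pos.2 hα)]

lemma exists_gt_measure_lt {g : ℝ → ℝ} (hg : ContinuousOn g (Set.Icc (0:ℝ) 1)) {m : ℝ}
    (hnull : volume.restrict (Set.Ico (0:ℝ) 1) {t | g t ≤ m} = 0) :
    ∃ c > m, (volume.restrict (Set.Ico (0:ℝ) 1)).real {t | g t < c} < 1 / 2 := by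
  have hm : AEMeasurable g (volume.restrict (Set.Ico (0:ℝ) 1)) :=
    (hg.mono Set.Ico_subset_Icc_self).aemeasurable measurableSet_Ico
  have ht := tendsto_measure_iInter_atTop (μ := volume.restrict (Set.Ico (0:ℝ) 1))
    (s := fun n : ℕ => {t | g t < m + 1 / ((n:ℝ) + 1)})
    (fun n => nullMeasurableSet_lt hm aemeasurable_const)
    (fun i j hij t (ht : g t < _) =>
      lt_of_lt_of_le ht (by have := Nat.one_div_le_one_div (α := ℝ) hij; linarith))
    ⟨0, measure_ne_top _ _⟩
  have h0 : volume.restrict (Set.Ico (0:ℝ) 1) (⋂ n : ℕ, {t | g t < m + 1 / ((n:ℝ) + 1)}) = 0 := by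
    refine measure_mono_null (fun t ht => ?_) hnull
    refine le_of_forall_pos_le_add (α := ℝ) fun ε hε => ?_
    obtain ⟨n, hn⟩ := exists_nat_one_div_lt hε
    have : g t < m + 1 / ((n:ℝ) + 1) := Set.mem_iInter.1 ht n
    linarith
  rw [h0] at ht
  have ht' := (ENNReal.tendsto_toReal ENNReal.zero_ne_top).comp ht
  obtain ⟨n, hn⟩ := (ht'.eventually (gt_mem_nhds
    (show ENNReal.toReal 0 < 1 / 2 by norm_num))).exists
  exact ⟨_, lt_add_of_pos_right m Nat.one_div_pos_of_nat, hn⟩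

/-- All minimizers of the cost stay a fixed positive distance above a lower bound `m` of `G`. -/
lemma exists_gt_forall_levCost_lt {G G' : ℝ → ℝ}
    (hderiv : ∀ t ∈ Set.Icc (0:ℝ) 1, HasDerivWithinAt G (G' t) (Set.Icc (0:ℝ) 1) t)
    (hzeros : {t ∈ Set.Icc (0:ℝ) 1 | G' t = 0}.Finite) {m : ℝ}
    (hm : ∀ t ∈ Set.Icc (0:ℝ) 1, m ≤ G t) :
    ∃ c > m, ∀ α < c, levCost G c < levCost G α := by
  have hnull : volume.restrict (Set.Ico (0:ℝ) 1) {t | G t ≤ m} = 0 := by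
    rw [Measure.restrict_apply' measurableSet_Ico]
    refine (Set.Finite.subset (hzeros.insert 0) ?_).measure_zero _
    rintro t ⟨ht, ht0, ht1⟩
    rcases ht0.eq_or_lt with rfl | ht0
    · exact Set.mem_insert _ _
    -- An interior point of the level set is a local minimum, so Fermat's theorem applies.
    have hnhds : Set.Icc (0:ℝ) 1 ∈ nhds t := Icc_mem_nhds ht0 ht1
    have hmin : IsLocalMin G t := by
      filter_upwards [hnhds] with s hs using le_trans ht (hm s hs)
    exact Or.inr ⟨⟨ht0.le, ht1.le⟩,
      hmin.hasDerivAt_eq_zero ((hderiv t ⟨ht0.le, ht1.le⟩).hasDerivAt hnhds)⟩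
  have hcont : ContinuousOn G (Set.Icc (0:ℝ) 1) := fun t ht => (hderiv t ht).continuousWithinAt
  obtain ⟨c, hc, hlt⟩ := exists_gt_measure_lt hcont hnull
  exact ⟨c, hc, fun α hα => levCost_lt_of_measure_lt hcont hlt hα⟩

/-- For a nonconstant continuously differentiable `G : [0,1] → ℝ` whose
derivative has only finitely many zeros in `[0,1]`, the level median lies strictly between
the minimum and the maximum of `G` on `[0,1]`. -/
theorem levMed_strictly_between_min_max
    (G G' : ℝ → ℝ)
    (hderiv : ∀ t ∈ Set.Icc (0:ℝ) 1, HasDerivWithinAt G (G' t) (Set.Icc (0:ℝ) 1) t)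
    (hG'_cont : ContinuousOn G' (Set.Icc (0:ℝ) 1))
    (hnonconst : ∃ a ∈ Set.Icc (0:ℝ) 1, ∃ b ∈ Set.Icc (0:ℝ) 1, G a ≠ G b)
    (hzeros : {t ∈ Set.Icc (0:ℝ) 1 | G' t = 0}.Finite) :
    sInf (G '' Set.Icc (0:ℝ) 1) < levMed G ∧ levMed G < sSup (G '' Set.Icc (0:ℝ) 1) := by
  have hcont : ContinuousOn G (Set.Icc (0:ℝ) 1) := fun t ht => (hderiv t ht).continuousWithinAt
  have hne : (Set.Icc (0:ℝ) 1).Nonempty := ⟨0, by simp⟩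
  obtain ⟨a, ha, hamin⟩ := isCompact_Icc.exists_isMinOn hne hcont
  obtain ⟨b, hb, hbmax⟩ := isCompact_Icc.exists_isMaxOn hne hcont
  have hinf : sInf (G '' Set.Icc (0:ℝ) 1) = G a :=
    IsLeast.csInf_eq ⟨⟨a, ha, rfl⟩, by rintro _ ⟨t, ht, rfl⟩; exact hamin ht⟩
  have hsup : sSup (G '' Set.Icc (0:ℝ) 1) = G b :=
    IsGreatest.csSup_eq ⟨⟨b, hb, rfl⟩, by rintro _ ⟨t, ht, rfl⟩; exact hbmax ht⟩
  obtain ⟨c, hc, hclt⟩ := exists_gt_forall_levCost_lt hderiv hzeros (m := G a)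
    fun t ht => hamin ht
  obtain ⟨d, hd, hdlt⟩ := exists_gt_forall_levCost_lt (G := fun t => -G t) (G' := fun t => -G' t)
    (fun t ht => (hderiv t ht).neg) (by simpa using hzeros) (m := -G b)
    fun t ht => neg_le_neg (hbmax ht)
  obtain ⟨α, hα⟩ := exists_forall_levCost_le hcont
  have hlow : ∀ x ∈ {α : ℝ | ∀ β : ℝ, levCost G α ≤ levCost G β}, c ≤ x := fun x hx => by
    by_contra! h
    exact absurd (hx c) (not_le.2 (hclt x h))
  have hupp : α ≤ -d := by
    by_contra! h
    have h1 := hdlt (-α) (by linarith)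
    have h2 := levCost_neg G (-d)
    rw [neg_neg] at h2
    rw [levCost_neg, h2] at h1
    exact absurd (hα (-d)) (not_le.2 h1)
  rw [hinf, hsup]
  have h1 : c ≤ levMed G := le_csInf ⟨α, hα⟩ hlow
  have h2 : levMed G ≤ α := csInf_le ⟨c, hlow⟩ hα
  exact ⟨by linarith, by linarith⟩

end
end

section
/- Let G : [0,1) → ℝ be bounded and measurable with λ({t ∈ [0,1) : G(t) = 0}) = 0, where λ is Lebesgue measure. Then the map g ↦ ∫₀¹ |g(t)| dt is directionally Hadamard differentiable at G with derivative Δ ↦ ∫₀¹ sign(G(t))·Δ(t) dt: for every bounded measurable Δ : [0,1) → ℝ, every sequence of positive reals t_n → 0, and every sequence of bounded measurable Δ_n : [0,1) → ℝ with sup_{t∈[0,1)} |Δ_n(t) − Δ(t)| → 0, one has (∫₀¹ |G(t) + t_n·Δ_n(t)| dt − ∫₀¹ |G(t)| dt)/t_n → ∫₀¹ sign(G(t))·Δ(t) dt as n → ∞. -/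
/-!
The function `|·|` is `1`-Lipschitz, and near any `x ≠ 0` it agrees with `y ↦ sign x * y`. So, off
the null set `{G = 0}`, the difference quotient `(|G + τₙ Δₙ| - |G|) / τₙ` is eventually equal to
`sign G * Δₙ`, which tends to `sign G * Δ`; and it is bounded by `|Δₙ| ≤ M + 1` once `Δₙ` is
uniformly within `1` of `Δ`. Dominated convergence on `[0,1)` gives the claim.
-/

open MeasureTheory Filter
open scoped ENNReal NNReal

noncomputable section

/-- Directional Hadamard differentiability of `|·|` on `ℝ` at a nonzero point. -/
lemma tendsto_abs_quotient {x d : ℝ} (hx : x ≠ 0) {τ e : ℕ → ℝ} (hτ_pos : ∀ n, 0 < τ n)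
    (hτ : Tendsto τ atTop (nhds 0)) (he : Tendsto e atTop (nhds d)) :
    Tendsto (fun n => (|x + τ n * e n| - |x|) / τ n) atTop (nhds (Real.sign x * d)) := by
  have hlim : Tendsto (fun n => x + τ n * e n) atTop (nhds x) := by
    simpa using tendsto_const_nhds.add (hτ.mul he)
  refine (he.const_mul (Real.sign x)).congr' ?_
  rcases lt_or_gt_of_ne hx with h | h
  · filter_upwards [hlim.eventually_lt_const h] with n hn
    have := (hτ_pos n).ne'
    rw [abs_of_neg hn, abs_of_neg h, Real.sign_of_neg h]
    field_simp
    ring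
  · filter_upwards [hlim.eventually_const_lt h] with n hn
    have := (hτ_pos n).ne'
    rw [abs_of_pos hn, abs_of_pos h, Real.sign_of_pos h]
    field_simp
    ring

lemma integrableOn_Ico_of_abs_le {f : ℝ → ℝ} (hf : Measurable f) {C : ℝ}
    (hC : ∀ t ∈ Set.Ico (0:ℝ) 1, |f t| ≤ C) : IntegrableOn f (Set.Ico (0:ℝ) 1) :=
  IntegrableOn.of_bound (by simp) hf.aestronglyMeasurable C
    ((ae_restrict_iff' measurableSet_Ico).2 (Eventually.of_forall hC))

/-- If `G : [0,1) → ℝ` is bounded measurable with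
`λ({G = 0}) = 0`, then `g ↦ ∫₀¹ |g|` is directionally Hadamard differentiable at `G` with
derivative `Δ ↦ ∫₀¹ sign(G(t))·Δ(t) dt`. -/
theorem l1norm_hadamard_differentiable
    (G : ℝ → ℝ) (hG : Measurable G)
    (MG : ℝ) (hMG : ∀ t ∈ Set.Ico (0:ℝ) 1, |G t| ≤ MG)
    (hzero : volume {t ∈ Set.Ico (0:ℝ) 1 | G t = 0} = 0)
    (Δ : ℝ → ℝ) (hΔ : Measurable Δ)
    (M : ℝ) (hM : ∀ t ∈ Set.Ico (0:ℝ) 1, |Δ t| ≤ M)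
    (τ : ℕ → ℝ) (hτ_pos : ∀ n, 0 < τ n) (hτ : Tendsto τ atTop (nhds 0))
    (Δn : ℕ → ℝ → ℝ) (hΔn_meas : ∀ n, Measurable (Δn n))
    (hΔn_bdd : ∀ n, ∃ Mn : ℝ, ∀ t ∈ Set.Ico (0:ℝ) 1, |Δn n t| ≤ Mn)
    (hΔn : TendstoUniformlyOn Δn Δ atTop (Set.Ico (0:ℝ) 1)) :
    Tendsto
      (fun n => ((∫ t in Set.Ico (0:ℝ) 1, |G t + τ n * Δn n t|) -
        (∫ t in Set.Ico (0:ℝ) 1, |G t|)) / τ n)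
      atTop
      (nhds (∫ t in Set.Ico (0:ℝ) 1, Real.sign (G t) * Δ t)) := by
  have hGi : IntegrableOn (fun t => |G t|) (Set.Ico (0:ℝ) 1) :=
    (integrableOn_Ico_of_abs_le hG hMG).abs
  have hni : ∀ n, IntegrableOn (fun t => |G t + τ n * Δn n t|) (Set.Ico (0:ℝ) 1) := fun n => by
    obtain ⟨Mn, hMn⟩ := hΔn_bdd n
    exact ((integrableOn_Ico_of_abs_le hG hMG).add
      ((integrableOn_Ico_of_abs_le (hΔn_meas n) hMn).const_mul (τ n))).abs
  have hquot : ∀ n, ((∫ t in Set.Ico (0:ℝ) 1, |G t + τ n * Δn n t|) -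
      (∫ t in Set.Ico (0:ℝ) 1, |G t|)) / τ n =
      ∫ t in Set.Ico (0:ℝ) 1, (|G t + τ n * Δn n t| - |G t|) / τ n := fun n => by
    rw [integral_div, integral_sub (hni n) hGi]
  simp_rw [hquot]
  refine tendsto_integral_filter_of_dominated_convergence (fun _ => M + 1) ?_ ?_ ?_ ?_
  · refine Eventually.of_forall fun n => Measurable.aestronglyMeasurable ?_
    have := hΔn_meas n
    fun_prop
  · filter_upwards [Metric.tendstoUniformlyOn_iff.1 hΔn 1 one_pos] with n hn
    refine (ae_restrict_iff' measurableSet_Ico).2 (Eventually.of_forall fun t ht => ?_)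
    have h1 := hn t ht
    have h2 := hM t ht
    have h3 : |(|G t + τ n * Δn n t| - |G t|)| ≤ |τ n * Δn n t| := by
      simpa using abs_abs_sub_abs_le (G t + τ n * Δn n t) (G t)
    rw [abs_mul, abs_of_pos (hτ_pos n)] at h3
    rw [Real.dist_eq, abs_sub_comm] at h1
    have h4 := abs_sub_abs_le_abs_sub (Δn n t) (Δ t)
    rw [Real.norm_eq_abs, abs_div, abs_of_pos (hτ_pos n), div_le_iff₀' (hτ_pos n)]
    exact h3.trans (mul_le_mul_of_nonneg_left (by linarith) (hτ_pos n).le)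
  · exact integrable_const _
  · rw [ae_restrict_iff' measurableSet_Ico]
    filter_upwards [measure_eq_zero_iff_ae_notMem.1 hzero] with t ht htI
    exact tendsto_abs_quotient (fun h => ht ⟨htI, h⟩) hτ_pos hτ (hΔn.tendsto_at htI)

end
end
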